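/- arXiv:1202.6322 — 2 statements merged into one kernel-verified Lean document; each statement's English description precedes it below -/
import Mathlib

section
/- Let L : ℕ → ℝ with L_n ≥ 1 for all n, Σ_{n=0}^∞ 1/L_n < ∞, B_N = Σ_{n=0}^N L_n and R_N = Σ_{n=N}^∞ 1/L_n. Assume: (i) B_{2N} ≤ c·B_N for all N > N₀ (some c > 1); (ii) B_N ∼ N^{d_H} with 2 ≤ d_H < 4; (iii) B_N^{(1)} ∼ N^{2+γ} and B̄_N^{(2)} ∼ N^{4−d_H+δ}; (iv) η is a sequence of functions on (0,1), each differentiable with η_n′(x) ≤ 0, satisfying the recursion η_n(x) = (η_{n+1}(x) + 1/L_n)/(1 + x·L_n·η_{n+1}(x)) and 1/L_n ≤ η_n(x) ≤ min(x^{−1/2}, R_n) for all n, x; (v) for every x in some interval (0,x₁) there exists N with x·F_N(x) > 1 ≥ x·F_{N−1}(x); (vi) |η_0′(x)| ∼ x^{−2+d_s/2} as x → 0 for some real d_s. Then d_s ≤ d_H − (2δ − (4−d_H)γ)/(2+γ). -/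
/-- `X_N ∼ N^a`: there are constants `0 < c₁ ≤ c₂`, `c₁' ≤ c₂'` and `N₀` with
`c₁ N^a (log N)^{c₁'} ≤ X_N ≤ c₂ N^a (log N)^{c₂'}` for all `N > N₀`. -/
def NAsymp (X : ℕ → ℝ) (a : ℝ) : Prop :=
  ∃ c₁ c₂ c₁' c₂' : ℝ, ∃ N₀ : ℕ, 0 < c₁ ∧ c₁ ≤ c₂ ∧ c₁' ≤ c₂' ∧
    ∀ N : ℕ, N₀ < N →
      c₁ * (N:ℝ)^a * (Real.log N)^c₁' ≤ X N ∧
      X N ≤ c₂ * (N:ℝ)^a * (Real.log N)^c₂'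

/-- `f(x) ∼ x^a` as `x → 0`: there are constants `0 < c₁ ≤ c₂`, `c₁' ≤ c₂'` and
`x₀ ∈ (0,1)` with `c₁ x^a (log(1/x))^{c₁'} ≤ f(x) ≤ c₂ x^a (log(1/x))^{c₂'}`
for all `0 < x < x₀`. -/
def ZeroAsymp (f : ℝ → ℝ) (a : ℝ) : Prop :=
  ∃ c₁ c₂ c₁' c₂' x₀ : ℝ, 0 < c₁ ∧ c₁ ≤ c₂ ∧ c₁' ≤ c₂' ∧ 0 < x₀ ∧ x₀ < 1 ∧
    ∀ x : ℝ, 0 < x → x < x₀ →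
      c₁ * x^a * (Real.log (1/x))^c₁' ≤ f x ∧
      f x ≤ c₂ * x^a * (Real.log (1/x))^c₂'

open Filter Topology

/-- log asymptotics along a general filter -/
lemma aux_log_squeeze {ι : Type*} {l : Filter ι} (X t : ι → ℝ) (a c₁ c₂ b₁ b₂ : ℝ)
    (hc₁ : 0 < c₁) (hc₂ : 0 < c₂) (ht : Tendsto t l atTop)
    (h : ∀ᶠ i in l, c₁ * (t i)^a * (Real.log (t i))^b₁ ≤ X i ∧
      X i ≤ c₂ * (t i)^a * (Real.log (t i))^b₂) :
    Tendsto (fun i => Real.log (X i) / Real.log (t i)) l (𝓝 a) := by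
  have key : ∀ c b : ℝ, Tendsto (fun i => (Real.log c + a * Real.log (t i)
      + b * Real.log (Real.log (t i))) / Real.log (t i)) l (𝓝 a) := by
    intro c b
    have hlt : Tendsto (fun i => Real.log (t i)) l atTop := Real.tendsto_log_atTop.comp ht
    have h1 : Tendsto (fun y : ℝ => Real.log c / y + a + b * (Real.log y / y)) atTop
        (𝓝 (0 + a + b * 0)) := by
      refine Tendsto.add (Tendsto.add ?_ tendsto_const_nhds) (Tendsto.const_mul _ ?_)
      · exact tendsto_const_nhds.div_atTop tendsto_id
      · exact Real.isLittleO_log_id_atTop.tendsto_div_nhds_zero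
    have h2 := h1.comp hlt
    simp only [zero_add, mul_zero, add_zero] at h2
    refine h2.congr' ?_
    filter_upwards [hlt.eventually_gt_atTop 0] with i hi
    simp only [Function.comp]
    field_simp
  have hlog : ∀ c b T : ℝ, 0 < c → 1 < T → 
      Real.log (c * T^a * (Real.log T)^b) = Real.log c + a * Real.log T 
        + b * Real.log (Real.log T) := by
    intro c b T hc hT
    have hT0 : 0 < T := by linarith
    have hl : 0 < Real.log T := Real.log_pos hT
    rw [Real.log_mul (by positivity) (by positivity), Real.log_mul (by positivity) (by positivity),
      Real.log_rpow hT0, Real.log_rpow hl]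
  refine tendsto_of_tendsto_of_tendsto_of_le_of_le' (key c₁ b₁) (key c₂ b₂) ?_ ?_
  · filter_upwards [h, ht.eventually_gt_atTop 1] with i hi hT
    have hl : 0 < Real.log (t i) := Real.log_pos hT
    have hT0 : 0 < t i := by linarith
    rw [← hlog c₁ b₁ _ hc₁ hT]
    exact div_le_div_of_nonneg_right (Real.log_le_log (by positivity) hi.1) hl.le
  · filter_upwards [h, ht.eventually_gt_atTop 1] with i hi hT
    have hl : 0 < Real.log (t i) := Real.log_pos hT
    have hT0 : 0 < t i := by linarith
    have hX : 0 < X i := lt_of_lt_of_le (by positivity) hi.1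
    rw [← hlog c₂ b₂ _ hc₂ hT]
    exact div_le_div_of_nonneg_right (Real.log_le_log hX hi.2) hl.le

lemma aux_NAsymp_log (X : ℕ → ℝ) (a : ℝ) (h : NAsymp X a) :
    Tendsto (fun N : ℕ => Real.log (X N) / Real.log N) atTop (𝓝 a) := by
  obtain ⟨c₁, c₂, b₁, b₂, N₀, h1, h2, h3, h4⟩ := h
  refine aux_log_squeeze X (fun N : ℕ => (N:ℝ)) a c₁ c₂ b₁ b₂ h1 (by linarith)
    tendsto_natCast_atTop_atTop ?_
  filter_upwards [eventually_gt_atTop N₀] with N hN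
  exact h4 N hN

lemma aux_NAsymp_pos (X : ℕ → ℝ) (a : ℝ) (h : NAsymp X a) : ∀ᶠ N in atTop, 0 < X N := by
  obtain ⟨c₁, c₂, b₁, b₂, N₀, h1, h2, h3, h4⟩ := h
  filter_upwards [eventually_gt_atTop N₀, eventually_gt_atTop 1] with N hN hN1
  have : (1:ℝ) < N := by exact_mod_cast hN1
  have hl : 0 < Real.log (N:ℝ) := Real.log_pos this
  exact lt_of_lt_of_le (by positivity) (h4 N hN).1

lemma aux_ZeroAsymp_log (f : ℝ → ℝ) (a : ℝ) (h : ZeroAsymp f a) (t : ℕ → ℝ)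
    (ht : Tendsto t atTop atTop) :
    Tendsto (fun N : ℕ => Real.log (f (1 / t N)) / Real.log (t N)) atTop (𝓝 (-a)) := by
  obtain ⟨c₁, c₂, b₁, b₂, x₀, h1, h2, h3, h4, h5, h6⟩ := h
  refine aux_log_squeeze (fun N => f (1 / t N)) t (-a) c₁ c₂ b₁ b₂ h1 (by linarith) ht ?_
  filter_upwards [ht.eventually_gt_atTop (1/x₀), ht.eventually_gt_atTop 0] with N hN h0
  have := h6 (1 / t N) (by positivity) (by rw [div_lt_iff₀ h0]; rw [div_lt_iff₀ h4] at hN; linarith)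
  simpa [Real.inv_rpow h0.le, Real.rpow_neg h0.le] using this

/-- the finite estimate -/
lemma aux_finite (L a d : ℕ → ℝ) (x : ℝ) (N : ℕ) (hL : ∀ n, 1 ≤ L n) (hx0 : 0 < x) (hx1 : x < 1)
    (ha : ∀ n, 0 < a n) (hd : ∀ n, 0 ≤ d n)
    (hrec : ∀ n, a n = (a (n+1) + 1 / L n) / (1 + x * L n * a (n+1)))
    (hdrec : ∀ n, d n = d (n+1) * (1 - x) / (1 + x * L n * a (n+1))^2
      + L n * a n * a (n+1) / (1 + x * L n * a (n+1)))
    (hF : x * ∑ k ∈ Finset.range (N+1), L k * a (k+1) ≤ 1)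
    (hN : x * N ≤ 1/2) :
    1 / 2 / (Real.exp 1)^5 * ∑ k ∈ Finset.range (N+1),
      L k * (∑ m ∈ Finset.Icc k N, 1 / L m) * (∑ n ∈ Finset.Icc (k+1) N, 1 / L n) ≤ d 0 := by
  set P : ℕ → ℝ := fun n => 1 + x * L n * a (n+1) with hP
  set E : ℕ → ℝ := fun n => ∏ j ∈ Finset.range n, P j with hE
  have hL0 : ∀ n, 0 < L n := fun n => by linarith [hL n]
  have hP1 : ∀ n, 1 ≤ P n := fun n => by
    have := mul_pos (mul_pos hx0 (hL0 n)) (ha (n+1))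
    simp only [hP]; linarith
  have hP0 : ∀ n, 0 < P n := fun n => by linarith [hP1 n]
  have hE1 : ∀ n, E (n+1) = E n * P n := fun n => Finset.prod_range_succ _ _
  have hE0 : ∀ n, 1 ≤ E n := by
    intro n
    induction n with
    | zero => simp [hE]
    | succ n ih => rw [hE1]; nlinarith [hP1 n]
  have hEpos : ∀ n, 0 < E n := fun n => by linarith [hE0 n]
  have hEmono : Monotone E := monotone_nat_of_le_succ (fun n => by
    rw [hE1]; nlinarith [hP1 n, hE0 n])
  have hEM : E (N+1) ≤ Real.exp 1 := by
    calc E (N+1) ≤ ∏ j ∈ Finset.range (N+1), Real.exp (x * (L j * a (j+1))) := by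
          apply Finset.prod_le_prod
          · intro i _; exact (hP0 i).le
          · intro i _
            have := Real.add_one_le_exp (x * (L i * a (i+1)))
            simp only [hP]; linarith
      _ = Real.exp (x * ∑ k ∈ Finset.range (N+1), L k * a (k+1)) := by
          rw [← Real.exp_sum, Finset.mul_sum]
      _ ≤ Real.exp 1 := Real.exp_le_exp.2 hF
  set M := Real.exp 1 with hM
  have hM0 : 0 < M := Real.exp_pos 1
  set S : ℕ → ℝ := fun k => ∑ m ∈ Finset.Icc k N, 1 / L m with hS
  have hS0 : ∀ k, 0 ≤ S k := fun k => Finset.sum_nonneg (fun i _ => by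
    have := hL0 i; positivity)
  -- lower bound on a
  have haux : ∀ j k, k + j = N + 1 → E k / E (N+1) * S k ≤ a k := by
    intro j
    induction j with
    | zero =>
      intro k hk
      have : S k = 0 := by simp only [hS]; rw [Finset.Icc_eq_empty (by omega)]; simp
      rw [this]; simpa using (ha k).le
    | succ j ih =>
      intro k hk
      have h1 := ih (k+1) (by omega)
      have hSk : S k = S (k+1) + 1 / L k := by
        simp only [hS]
        rw [← Finset.add_sum_Ioc_eq_sum_Icc (by omega : k ≤ N), add_comm]
        congr 1
        apply Finset.sum_congr _ (fun _ _ => rfl)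
        ext i
        simp only [Finset.mem_Ioc, Finset.mem_Icc]
        omega
      rw [hrec k, le_div_iff₀ (hP0 k)]
      have h2 : E k / E (N+1) * S k * P k = E (k+1) / E (N+1) * S (k+1)
          + E (k+1) / E (N+1) * (1 / L k) := by
        rw [hSk, hE1 k]; ring
      have h3 : E (k+1) / E (N+1) ≤ 1 := by
        rw [div_le_one (hEpos _)]; exact hEmono (by omega)
      have h4 : 0 < 1 / L k := by have := hL0 k; positivity
      change E k / E (N+1) * S k * P k ≤ _
      rw [h2]
      nlinarith
  have haS : ∀ k, k ≤ N + 1 → S k / M ≤ a k := by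
    intro k hk
    refine le_trans ?_ (haux (N+1-k) k (by omega))
    rw [div_eq_mul_inv, mul_comm]
    apply mul_le_mul_of_nonneg_right _ (hS0 k)
    rw [inv_eq_one_div]
    exact div_le_div₀ (hEpos k).le (hE0 k) (hEpos _) hEM
  -- unfolding d
  have hunf : ∀ n, d 0 = ∑ k ∈ Finset.range n, (1-x)^k / (E k)^2 * (L k * a k * a (k+1) / P k)
      + (1-x)^n / (E n)^2 * d n := by
    intro n
    induction n with
    | zero => simp [hE]
    | succ n ih =>
      rw [Finset.sum_range_succ, ih, hE1]
      conv_lhs => rw [hdrec n]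
      change _ + (1 - x)^n / (E n)^2 * (d (n+1) * (1-x) / (P n)^2 + L n * a n * a (n+1) / P n) = _
      have := (hP0 n).ne'
      have := (hEpos n).ne'
      field_simp
      ring
  have hx1' : 0 < 1 - x := by linarith
  rw [hunf (N+1), Finset.mul_sum]
  have hlast : 0 ≤ (1-x)^(N+1) / (E (N+1))^2 * d (N+1) := by
    have := hd (N+1); positivity
  refine le_trans (Finset.sum_le_sum ?_) (le_add_of_nonneg_right hlast)
  intro k hk
  have hkN : k ≤ N := by simpa [Nat.lt_succ_iff] using hk
  change 1/2/M^5 * (L k * S k * S (k+1)) ≤ _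
  have hpow : 1/2 ≤ (1-x)^k := by
    have h1 : 1 - x * N ≤ (1-x)^N := by
      have := one_add_mul_le_pow (a := -x) (by linarith) N
      have e : 1 + -x = 1 - x := by ring
      rw [e] at this
      linarith
    have h2 : (1-x)^N ≤ (1-x)^k := pow_le_pow_of_le_one hx1'.le (by linarith) hkN
    linarith
  have hEk : E k ≤ M := (hEmono (by omega)).trans hEM
  have hPk : P k ≤ M := by
    have h1 : E (k+1) ≤ M := (hEmono (by omega)).trans hEM
    rw [hE1] at h1
    nlinarith [hE0 k, hP0 k]
  have e : 1/2/M^5 * (L k * S k * S (k+1)) 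
      = (1/2 / M^2) * (L k * (S k / M) * (S (k+1) / M) / M) := by
    field_simp
  rw [e]
  have hLk := hL0 k
  have hak := ha k
  have hak1 := ha (k+1)
  have hSk := hS0 k
  have hSk1 := hS0 (k+1)
  have hEk0 := hEpos k
  have hPk0 := hP0 k
  have h1 := haS k (by omega)
  have h2 := haS (k+1) (by omega)
  gcongr

lemma aux_B1 (L : ℕ → ℝ) (hL : ∀ n : ℕ, 1 ≤ L n)
    (hsum : Summable (fun n : ℕ => 1 / L n))
    (R : ℕ → ℝ) (hR : ∀ N : ℕ, R N = ∑' n : ℕ, 1 / L (N + n))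
    (c : ℝ) (hc : 1 < c) (N : ℕ)
    (hdbl : (∑ n ∈ Finset.range (2*N+1), L n) ≤ c * ∑ n ∈ Finset.range (N+1), L n) :
    (N:ℝ)^2 / c ≤ ∑ k ∈ Finset.range (N+1), L k * R (k+1) := by
  have hL0 : ∀ n, 0 < L n := fun n => by linarith [hL n]
  have hsum' : ∀ n, Summable (fun i => 1 / L (n + i)) := fun n => by
    have := (summable_nat_add_iff n).2 hsum
    refine this.congr (fun i => ?_)
    rw [add_comm]
  have hanti : Antitone R := antitone_nat_of_succ_le (fun n => by
    rw [hR n, hR (n+1), (hsum' n).tsum_eq_zero_add]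
    have e : ∀ i, n + (i+1) = n + 1 + i := fun i => by ring
    have e2 : (∑' i : ℕ, 1 / L (n + (i+1))) = ∑' i : ℕ, 1 / L (n + 1 + i) :=
      tsum_congr (fun i => by rw [e i])
    rw [e2]
    have := hL0 (n+0)
    have : 0 < 1 / L (n+0) := by positivity
    linarith)
  set T := ∑ i ∈ Finset.range N, 1 / L (N + 1 + i) with hT
  have hT0 : 0 ≤ T := Finset.sum_nonneg (fun i _ => by have := hL0 (N+1+i); positivity)
  have hTR : T ≤ R (N+1) := by
    rw [hR]
    exact (hsum' (N+1)).sum_le_tsum _ (fun i _ => by have := hL0 (N+1+i); positivity)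
  set U := ∑ i ∈ Finset.range N, L (N + 1 + i) with hU
  have hCS : (N:ℝ)^2 ≤ T * U := by
    have := Finset.sum_sq_le_sum_mul_sum_of_sq_le_mul (Finset.range N) (r := fun _ => (1:ℝ))
      (f := fun i => 1 / L (N+1+i)) (g := fun i => L (N+1+i))
      (fun i _ => by have := hL0 (N+1+i); positivity) (fun i _ => (hL0 _).le)
      (fun i _ => by have := (hL0 (N+1+i)).ne'; simp [this])
    simpa [hT, hU] using this
  have hUB : U ≤ ∑ n ∈ Finset.range (2*N+1), L n := by
    have : 2*N+1 = (N+1) + N := by ring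
    rw [this, Finset.sum_range_add]
    have : 0 ≤ ∑ n ∈ Finset.range (N+1), L n := Finset.sum_nonneg (fun i _ => (hL0 i).le)
    linarith
  rw [div_le_iff₀ (by linarith)]
  calc (N:ℝ)^2 ≤ T * U := hCS
    _ ≤ T * (c * ∑ n ∈ Finset.range (N+1), L n) := by
        apply mul_le_mul_of_nonneg_left _ hT0; linarith
    _ = (∑ n ∈ Finset.range (N+1), L n * T) * c := by rw [← Finset.sum_mul]; ring
    _ ≤ _ := by
        apply mul_le_mul_of_nonneg_right _ (by linarith)
        apply Finset.sum_le_sum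
        intro k hk
        apply mul_le_mul_of_nonneg_left _ (hL0 k).le
        refine hTR.trans (hanti ?_)
        have := Finset.mem_range.1 hk
        omega

/-- Lemma 7 of the paper: under volume doubling, `B_N ∼ N^{d_H}` with `2 ≤ d_H < 4`,
`B_N^{(1)} ∼ N^{2+γ}`, `B̄_N^{(2)} ∼ N^{4-d_H+δ}`, the universal bounds
`1/L_n ≤ η_n(x) ≤ min(x^{-1/2}, R_n)`, and existence of the crossover scale `N⁻(x)`,
the spectral dimension satisfies `d_s ≤ d_H - (2δ - (4-d_H)γ)/(2+γ)`. -/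
theorem stmt_12 (L : ℕ → ℝ) (hL : ∀ n : ℕ, 1 ≤ L n)
    (hsum : Summable (fun n : ℕ => 1 / L n))
    (R : ℕ → ℝ) (hR : ∀ N : ℕ, R N = ∑' n : ℕ, 1 / L (N + n))
    (c : ℝ) (hc : 1 < c) (N₀ : ℕ)
    (hdbl : ∀ N : ℕ, N₀ < N →
      (∑ n ∈ Finset.range (2*N+1), L n) ≤ c * ∑ n ∈ Finset.range (N+1), L n)
    (dH γ δ : ℝ) (hdH2 : 2 ≤ dH) (hdH4 : dH < 4)
    (hB : NAsymp (fun N => ∑ n ∈ Finset.range (N+1), L n) dH)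
    (hB1 : NAsymp (fun N => ∑ k ∈ Finset.range (N+1), L k * R (k+1)) (2 + γ))
    (hB2bar : NAsymp (fun N => ∑ k ∈ Finset.range (N+1),
      L k * (∑ m ∈ Finset.Icc k N, 1 / L m) * (∑ n ∈ Finset.Icc (k+1) N, 1 / L n))
      (4 - dH + δ))
    (η η' : ℕ → ℝ → ℝ)
    (hderiv : ∀ (n : ℕ), ∀ x ∈ Set.Ioo (0:ℝ) 1, HasDerivAt (η n) (η' n x) x)
    (hmono : ∀ (n : ℕ), ∀ x ∈ Set.Ioo (0:ℝ) 1, η' n x ≤ 0)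
    (hrec : ∀ (n : ℕ), ∀ x ∈ Set.Ioo (0:ℝ) 1,
      η n x = (η (n+1) x + 1 / L n) / (1 + x * L n * η (n+1) x))
    (hbnd : ∀ (n : ℕ), ∀ x ∈ Set.Ioo (0:ℝ) 1,
      1 / L n ≤ η n x ∧ η n x ≤ min (x ^ (-(1:ℝ)/2)) (R n))
    (x₁ : ℝ) (hx₁ : 0 < x₁)
    (hcross : ∀ x : ℝ, 0 < x → x < x₁ → ∃ N : ℕ, 1 ≤ N ∧
      1 < x * ∑ k ∈ Finset.range (N+1), L k * η (k+1) x ∧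
      x * ∑ k ∈ Finset.range N, L k * η (k+1) x ≤ 1)
    (ds : ℝ) (hds : ZeroAsymp (fun x => |η' 0 x|) (-2 + ds/2)) :
    ds ≤ dH - (2*δ - (4 - dH)*γ) / (2 + γ) := by
  have hL0 : ∀ n, 0 < L n := fun n => by linarith [hL n]
  set B1 : ℕ → ℝ := fun N => ∑ k ∈ Finset.range (N+1), L k * R (k+1) with hB1def
  set B2 : ℕ → ℝ := fun N => ∑ k ∈ Finset.range (N+1),
      L k * (∑ m ∈ Finset.Icc k N, 1 / L m) * (∑ n ∈ Finset.Icc (k+1) N, 1 / L n) with hB2def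
  have hB1ge : ∀ N, N₀ < N → (N:ℝ)^2 / c ≤ B1 N := fun N hN =>
    aux_B1 L hL hsum R hR c hc N (hdbl N hN)
  have hcast : Tendsto (fun N : ℕ => (N:ℝ)) atTop atTop := tendsto_natCast_atTop_atTop
  have hB1N : ∀ᶠ N : ℕ in atTop, 2 * (N:ℝ) ≤ B1 N := by
    filter_upwards [eventually_gt_atTop N₀, hcast.eventually_ge_atTop (2*c)] with N hN hNc
    refine le_trans ?_ (hB1ge N hN)
    rw [le_div_iff₀ (by linarith)]
    nlinarith
  have hB1top : Tendsto B1 atTop atTop := by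
    refine tendsto_atTop_mono' _ ?_ hcast
    filter_upwards [hB1N] with N hN
    have : (0:ℝ) ≤ N := Nat.cast_nonneg N
    linarith
  -- main inequality
  have hmain : ∀ᶠ N : ℕ in atTop, 1 / 2 / (Real.exp 1)^5 * B2 N ≤ |η' 0 (1 / B1 N)| := by
    filter_upwards [hB1N, hB1top.eventually_gt_atTop 1] with N hN hgt
    have hpos : 0 < B1 N := by linarith
    have hx : 1 / B1 N ∈ Set.Ioo (0:ℝ) 1 := ⟨by positivity, by rw [div_lt_one hpos]; exact hgt⟩
    set x := 1 / B1 N with hxdef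
    have hapos : ∀ n, ∀ y ∈ Set.Ioo (0:ℝ) 1, 0 < η n y := fun n y hy =>
      lt_of_lt_of_le (by have := hL0 n; positivity) (hbnd n y hy).1
    rw [abs_of_nonpos (hmono 0 x hx)]
    refine aux_finite L (fun n => η n x) (fun n => - η' n x) x N hL hx.1 hx.2
      (fun n => hapos n x hx) (fun n => by linarith [hmono n x hx])
      (fun n => hrec n x hx) ?_ ?_ ?_
    · intro n
      have hu := hderiv (n+1) x hx
      have hu0 := hapos (n+1) x hx
      have hx0 : 0 < x := hx.1
      have hLn := hL0 n
      have hden : 1 + x * L n * η (n+1) x ≠ 0 := by positivity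
      have hid : HasDerivAt (fun y : ℝ => 1 + y * L n * η (n+1) y)
          (1 * L n * η (n+1) x + x * L n * η' (n+1) x) x :=
        (((hasDerivAt_id x).mul_const (L n)).mul hu).const_add 1
      have hq := (hu.add_const (1 / L n)).div hid hden
      have heq : (η n) =ᶠ[𝓝 x] (fun y => (η (n+1) y + 1 / L n) / (1 + y * L n * η (n+1) y)) := by
        filter_upwards [isOpen_Ioo.mem_nhds hx] with y hy
        exact hrec n y hy
      have h1 := (hderiv n x hx).unique (hq.congr_of_eventuallyEq heq)
      rw [h1, hrec n x hx]
      field_simp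
      ring
    · have : ∑ k ∈ Finset.range (N+1), L k * η (k+1) x ≤ B1 N := by
        apply Finset.sum_le_sum
        intro k _
        exact mul_le_mul_of_nonneg_left ((hbnd (k+1) x hx).2.trans (min_le_right _ _)) (hL0 k).le
      calc x * _ ≤ x * B1 N := mul_le_mul_of_nonneg_left this hx.1.le
        _ = 1 := by rw [hxdef]; field_simp
    · rw [hxdef, one_div_mul_eq_div, div_le_iff₀ hpos]; linarith
  have l1 := aux_NAsymp_log _ _ hB1
  have l2 := aux_NAsymp_log _ _ hB2bar
  have p2 := aux_NAsymp_pos _ _ hB2bar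
  have l3 := aux_ZeroAsymp_log _ _ hds B1 hB1top
  have hlogN : Tendsto (fun N : ℕ => Real.log (N:ℝ)) atTop atTop :=
    Real.tendsto_log_atTop.comp hcast
  have hγ : 1 ≤ 2 + γ := by
    refine ge_of_tendsto l1 ?_
    filter_upwards [hB1N, hcast.eventually_gt_atTop 1] with N hN h1
    rw [le_div_iff₀ (Real.log_pos h1), one_mul]
    exact Real.log_le_log (by linarith) (by linarith)
  have l4 : Tendsto (fun N : ℕ => Real.log |η' 0 (1 / B1 N)| / Real.log N) atTop
      (𝓝 (-(-2 + ds/2) * (2 + γ))) := by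
    refine (l3.mul l1).congr' ?_
    filter_upwards [hB1top.eventually_gt_atTop 1] with N hN
    have : Real.log (B1 N) ≠ 0 := (Real.log_pos hN).ne'
    exact div_mul_div_cancel₀ this
  set C : ℝ := 1 / 2 / (Real.exp 1)^5 with hC
  have hC0 : 0 < C := by positivity
  have l5 : Tendsto (fun N : ℕ => Real.log C / Real.log N + Real.log (B2 N) / Real.log N) atTop
      (𝓝 (0 + (4 - dH + δ))) :=
    (tendsto_const_nhds.div_atTop hlogN).add l2
  have hfin : 0 + (4 - dH + δ) ≤ -(-2 + ds/2) * (2 + γ) := by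
    refine le_of_tendsto_of_tendsto l5 l4 ?_
    filter_upwards [hmain, p2, hcast.eventually_gt_atTop 1] with N h1 h2 h3
    have h2' : 0 < B2 N := h2
    rw [← add_div, ← Real.log_mul hC0.ne' h2'.ne']
    exact div_le_div_of_nonneg_right (Real.log_le_log (by positivity) h1) (Real.log_pos h3).le
  have hg0 : 0 < 2 + γ := by linarith
  rw [le_sub_iff_add_le, ← le_sub_iff_add_le', div_le_iff₀ hg0]
  nlinarith
end

section
/- Let L : ℕ → ℝ with L_n ≥ 1 for all n, Σ_{n=0}^∞ 1/L_n < ∞, B_N = Σ_{n=0}^N L_n and R_N = Σ_{n=N}^∞ 1/L_n. Assume: (i) B_{2N} ≤ c·B_N for all N > N₀ (some c > 1); (ii) B_N ∼ N^{d_H} with 2 ≤ d_H < 4; (iii) R_N ∼ N^{2−d_H+ρ} for some real ρ; (iv) η is a sequence of functions, each positive, differentiable, nonincreasing and convex on (0,1), with lim_{x→0+} η_n(x) = R_n and 1/L_n ≤ η_n(x) ≤ x^{−1/2}, satisfying the recursion η_n(x) = (η_{n+1}(x) + 1/L_n)/(1 + x·L_n·η_{n+1}(x)) for all n and x ∈ (0,1);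 (v) for every sufficiently large k there exists x_k ∈ (0,1) with x_k·F_{k−1}(x_k) = 1 and x_k → 0 as k → ∞. Then if the spectral dimension exists, i.e. |η_0′(x)| ∼ x^{−2+d_s/2} as x → 0 for some real d_s, it equals d_s = 2·d_H/(2+ρ). -/
/-- Exponential upper growth bound with rate `s` (base two, up to `ε`) along the filter `F`. -/
def UpR (F : Filter ℕ) (u : ℕ → ℝ) (s : ℝ) : Prop :=
  ∀ ε : ℝ, 0 < ε → ∀ᶠ i : ℕ in F, u i ≤ (2:ℝ) ^ ((s + ε) * (i:ℝ))

/-- Exponential lower growth bound with rate `s` (base two, up to `ε`) along the filter `F`. -/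
def LoR (F : Filter ℕ) (u : ℕ → ℝ) (s : ℝ) : Prop :=
  ∀ ε : ℝ, 0 < ε → ∀ᶠ i : ℕ in F, (2:ℝ) ^ ((s - ε) * (i:ℝ)) ≤ u i

lemma absorb_exp (C p ε : ℝ) (hε : 0 < ε) :
    ∀ᶠ y : ℝ in Filter.atTop, C * y ^ p ≤ Real.exp (ε * y) := by
  have h := isLittleO_rpow_exp_pos_mul_atTop p hε
  have h2 := h.bound (c := 1 / (|C| + 1)) (by positivity)
  filter_upwards [h2, Filter.eventually_gt_atTop 0] with y hy hy0
  have hp : 0 < y ^ p := Real.rpow_pos_of_pos hy0 p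
  rw [Real.norm_of_nonneg hp.le, Real.norm_of_nonneg (Real.exp_pos _).le] at hy
  rw [one_div, inv_mul_eq_div, le_div_iff₀ (by positivity)] at hy
  have : C ≤ |C| := le_abs_self C
  nlinarith

lemma absorb_nat (C p ε : ℝ) (j : ℕ) (hε : 0 < ε) :
    ∀ᶠ i : ℕ in Filter.atTop,
      C * (Real.log ((2:ℝ) ^ (i + j))) ^ p ≤ (2:ℝ) ^ (ε * (i:ℝ)) := by
  have hl : 0 < Real.log 2 := Real.log_pos (by norm_num)
  have ht : Filter.Tendsto (fun i : ℕ => Real.log ((2:ℝ) ^ (i + j))) Filter.atTop Filter.atTop := by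
    have : (fun i : ℕ => Real.log ((2:ℝ) ^ (i + j))) = fun i : ℕ => ((i:ℝ) + j) * Real.log 2 := by
      funext i; rw [Real.log_pow]; push_cast; ring
    rw [this]
    exact (Filter.tendsto_atTop_add_const_right _ _ tendsto_natCast_atTop_atTop).atTop_mul_const hl
  have h := ht.eventually (absorb_exp (C * Real.exp (ε * (j * Real.log 2))) p ε hε)
  filter_upwards [h] with i hi
  have e1 : Real.exp (ε * Real.log ((2:ℝ) ^ (i + j)))
      = (2:ℝ) ^ (ε * (i:ℝ)) * Real.exp (ε * (j * Real.log 2)) := by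
    rw [Real.rpow_def_of_pos (by norm_num), ← Real.exp_add, Real.log_pow]
    congr 1; push_cast; ring
  rw [e1] at hi
  have hp := Real.exp_pos (ε * (j * Real.log 2))
  refine le_of_mul_le_mul_right ?_ hp
  linarith

lemma two_pos_rpow (y : ℝ) : 0 < (2:ℝ) ^ y := Real.rpow_pos_of_pos (by norm_num) y

lemma absorb_const (C ε : ℝ) (hε : 0 < ε) :
    ∀ᶠ i : ℕ in Filter.atTop, C ≤ (2:ℝ) ^ (ε * (i:ℝ)) := by
  have := absorb_nat C 0 ε 0 hε
  simpa using this

lemma nasymp_up {X : ℕ → ℝ} {a : ℝ} (h : NAsymp X a) (j : ℕ) :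
    UpR Filter.atTop (fun i => X (2 ^ (i + j))) a := by
  obtain ⟨c1, c2, p1, p2, N0, hc1, hc12, hp, hX⟩ := h
  intro ε hε
  filter_upwards [absorb_nat (c2 * (2:ℝ) ^ (a * j)) p2 ε j hε, Filter.eventually_ge_atTop N0]
    with i hi hiN
  have hN : N0 < 2 ^ (i + j) :=
    lt_of_lt_of_le (lt_of_le_of_lt hiN Nat.lt_two_pow_self) (Nat.pow_le_pow_right (by norm_num) (by omega))
  have h1 := (hX _ hN).2
  push_cast at h1
  have e : ((2:ℝ) ^ (i + j)) ^ a = (2:ℝ) ^ (a * i) * (2:ℝ) ^ (a * j) := by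
    rw [← Real.rpow_natCast, ← Real.rpow_mul (by norm_num), ← Real.rpow_add (by norm_num)]
    congr 1; push_cast; ring
  rw [e] at h1
  calc X (2 ^ (i + j)) ≤ _ := h1
    _ = (2:ℝ) ^ (a * i) * (c2 * (2:ℝ) ^ (a * j) * (Real.log ((2:ℝ) ^ (i + j))) ^ p2) := by ring
    _ ≤ (2:ℝ) ^ (a * i) * (2:ℝ) ^ (ε * (i:ℝ)) := by
        gcongr
    _ = _ := by rw [← Real.rpow_add (by norm_num)]; congr 1; ring

lemma nasymp_lo {X : ℕ → ℝ} {a : ℝ} (h : NAsymp X a) (j : ℕ) :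
    LoR Filter.atTop (fun i => X (2 ^ (i + j))) a := by
  obtain ⟨c1, c2, p1, p2, N0, hc1, hc12, hp, hX⟩ := h
  intro ε hε
  filter_upwards [absorb_nat ((c1 * (2:ℝ) ^ (a * j))⁻¹) (-p1) ε j hε, Filter.eventually_ge_atTop N0,
    Filter.eventually_ge_atTop 1] with i hi hiN hi1
  have hN : N0 < 2 ^ (i + j) :=
    lt_of_lt_of_le (lt_of_le_of_lt hiN Nat.lt_two_pow_self) (Nat.pow_le_pow_right (by norm_num) (by omega))
  have h1 := (hX _ hN).1
  push_cast at h1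
  have e : ((2:ℝ) ^ (i + j)) ^ a = (2:ℝ) ^ (a * i) * (2:ℝ) ^ (a * j) := by
    rw [← Real.rpow_natCast, ← Real.rpow_mul (by norm_num), ← Real.rpow_add (by norm_num)]
    congr 1; push_cast; ring
  rw [e] at h1
  have hlog : 0 < Real.log ((2:ℝ) ^ (i + j)) :=
    Real.log_pos (one_lt_pow₀ (by norm_num) (by omega))
  have hlp := Real.rpow_pos_of_pos hlog p1
  have h2j := two_pos_rpow (a * j)
  rw [Real.rpow_neg hlog.le, ← mul_inv] at hi
  have hq : 0 < c1 * (2:ℝ) ^ (a * j) * (Real.log ((2:ℝ) ^ (i + j))) ^ p1 := by positivity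
  have hi' : (2:ℝ) ^ (-(ε * (i:ℝ))) ≤ c1 * (2:ℝ) ^ (a * j) * (Real.log ((2:ℝ) ^ (i + j))) ^ p1 := by
    rw [Real.rpow_neg (by norm_num)]
    exact inv_le_of_inv_le₀ hq hi
  calc (2:ℝ) ^ ((a - ε) * (i:ℝ)) = (2:ℝ) ^ (a * i) * (2:ℝ) ^ (-(ε * (i:ℝ))) := by
        rw [← Real.rpow_add (by norm_num)]; congr 1; ring
    _ ≤ (2:ℝ) ^ (a * i) * (c1 * (2:ℝ) ^ (a * j) * (Real.log ((2:ℝ) ^ (i + j))) ^ p1) := by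
        gcongr
    _ = _ := by ring
    _ ≤ _ := h1

lemma UpR.mono {F G : Filter ℕ} {u : ℕ → ℝ} {s : ℝ} (h : UpR F u s) (hG : G ≤ F) : UpR G u s :=
  fun ε hε => (h ε hε).filter_mono hG

lemma LoR.mono {F G : Filter ℕ} {u : ℕ → ℝ} {s : ℝ} (h : LoR F u s) (hG : G ≤ F) : LoR G u s :=
  fun ε hε => (h ε hε).filter_mono hG

lemma UpR.of_le {F : Filter ℕ} {u v : ℕ → ℝ} {s : ℝ} (h : UpR F u s)
    (hv : ∀ᶠ i in F, v i ≤ u i) : UpR F v s := fun ε hε => by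
  filter_upwards [h ε hε, hv] with i h1 h2 using h2.trans h1

lemma LoR.of_le {F : Filter ℕ} {u v : ℕ → ℝ} {s : ℝ} (h : LoR F u s)
    (hv : ∀ᶠ i : ℕ in F, u i ≤ v i) : LoR F v s := fun ε hε => by
  filter_upwards [h ε hε, hv] with i h1 h2 using h1.trans h2

lemma UpR.mul {F : Filter ℕ} {u v : ℕ → ℝ} {s t : ℝ} (h : UpR F u s) (h' : UpR F v t)
    (hv : ∀ᶠ i in F, 0 ≤ v i) : UpR F (fun i => u i * v i) (s + t) := fun ε hε => by
  filter_upwards [h (ε/2) (by positivity), h' (ε/2) (by positivity), hv] with i h1 h2 h3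
  calc u i * v i ≤ (2:ℝ) ^ ((s + ε/2) * (i:ℝ)) * (2:ℝ) ^ ((t + ε/2) * (i:ℝ)) :=
        mul_le_mul h1 h2 h3 (two_pos_rpow _).le
    _ = _ := by rw [← Real.rpow_add (by norm_num)]; congr 1; ring

lemma LoR.mul {F : Filter ℕ} {u v : ℕ → ℝ} {s t : ℝ} (h : LoR F u s) (h' : LoR F v t) :
    LoR F (fun i => u i * v i) (s + t) := fun ε hε => by
  filter_upwards [h (ε/2) (by positivity), h' (ε/2) (by positivity)] with i h1 h2
  calc _ = (2:ℝ) ^ ((s - ε/2) * (i:ℝ)) * (2:ℝ) ^ ((t - ε/2) * (i:ℝ)) := by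
        rw [← Real.rpow_add (by norm_num)]; congr 1; ring
    _ ≤ _ := mul_le_mul h1 h2 (two_pos_rpow _).le ((two_pos_rpow _).le.trans h1)

lemma UpR.inv {F : Filter ℕ} {u : ℕ → ℝ} {s : ℝ} (h : UpR F u s) (hu : ∀ᶠ i in F, 0 < u i) :
    LoR F (fun i => (u i)⁻¹) (-s) := fun ε hε => by
  filter_upwards [h ε hε, hu] with i h1 h2
  have : (2:ℝ) ^ ((-s - ε) * (i:ℝ)) = ((2:ℝ) ^ ((s + ε) * (i:ℝ)))⁻¹ := by
    rw [← Real.rpow_neg (by norm_num)]; congr 1; ring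
  rw [this]
  exact inv_anti₀ h2 h1

lemma LoR.inv {F : Filter ℕ} {u : ℕ → ℝ} {s : ℝ} (h : LoR F u s) :
    UpR F (fun i => (u i)⁻¹) (-s) := fun ε hε => by
  filter_upwards [h ε hε] with i h1
  have : (2:ℝ) ^ ((-s + ε) * (i:ℝ)) = ((2:ℝ) ^ ((s - ε) * (i:ℝ)))⁻¹ := by
    rw [← Real.rpow_neg (by norm_num)]; congr 1; ring
  rw [this]
  exact inv_anti₀ (two_pos_rpow _) h1

lemma upR_const {F : Filter ℕ} (hF : F ≤ Filter.atTop) (C : ℝ) : UpR F (fun _ => C) 0 :=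
  fun ε hε => by
    have := (absorb_const C ε hε).filter_mono hF
    simpa using this

lemma loR_const {F : Filter ℕ} (hF : F ≤ Filter.atTop) {C : ℝ} (hC : 0 < C) :
    LoR F (fun _ => C) 0 := by
  have := (upR_const hF C⁻¹).inv (Filter.Eventually.of_forall fun _ => by positivity)
  simpa using this

lemma UpR.add {F : Filter ℕ} (hF : F ≤ Filter.atTop) {u v : ℕ → ℝ} {s : ℝ}
    (h : UpR F u s) (h' : UpR F v s) : UpR F (fun i => u i + v i) s := fun ε hε => by
  filter_upwards [h (ε/2) (by positivity), h' (ε/2) (by positivity),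
    (absorb_const 2 (ε/2) (by positivity)).filter_mono hF] with i h1 h2 h3
  calc u i + v i ≤ 2 * (2:ℝ) ^ ((s + ε/2) * (i:ℝ)) := by linarith
    _ ≤ (2:ℝ) ^ (ε/2 * (i:ℝ)) * (2:ℝ) ^ ((s + ε/2) * (i:ℝ)) := by
      gcongr
    _ = _ := by rw [← Real.rpow_add (by norm_num)]; congr 1; ring

lemma upR_poly : UpR Filter.atTop (fun i => ((i:ℝ) + 1) ^ 2) 0 := fun ε hε => by
  have hl : 0 < Real.log 2 := Real.log_pos (by norm_num)
  filter_upwards [absorb_nat ((Real.log 2)⁻¹ ^ 2) 2 ε 1 hε] with i hi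
  rw [Real.log_pow] at hi
  have : ((Real.log 2)⁻¹ ^ 2) * (((i + 1 : ℕ) : ℝ) * Real.log 2) ^ (2:ℝ) = ((i:ℝ) + 1) ^ 2 := by
    have h2 : (2:ℝ) = ((2:ℕ):ℝ) := by norm_num
    rw [show (((i + 1 : ℕ) : ℝ) * Real.log 2) ^ (2:ℝ) = (((i + 1 : ℕ) : ℝ) * Real.log 2) ^ (2:ℕ) from by
      exact_mod_cast Real.rpow_natCast _ 2]
    push_cast
    field_simp
  rw [this] at hi
  simpa using hi

lemma UpR.sum {D : ℕ → ℝ} {s : ℝ} (hs : 0 ≤ s) (h : UpR Filter.atTop D s) :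
    UpR Filter.atTop (fun i => ∑ l ∈ Finset.range (i + 1), D l) s := fun ε hε => by
  obtain ⟨M, hM⟩ := Filter.eventually_atTop.1 (h (ε/2) (by positivity))
  have hC : ∃ C : ℝ, 1 ≤ C ∧ ∀ l, D l ≤ C * (2:ℝ) ^ ((s + ε/2) * (l:ℝ)) := by
    refine ⟨1 + ∑ l ∈ Finset.range M, |D l|, ?_, fun l => ?_⟩
    · have := Finset.sum_nonneg (s := Finset.range M) (f := fun l => |D l|) (fun _ _ => abs_nonneg _)
      linarith
    · have h0 := Finset.sum_nonneg (s := Finset.range M) (f := fun l => |D l|) (fun _ _ => abs_nonneg _)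
      by_cases hl : M ≤ l
      · have := hM l hl
        have h2 := two_pos_rpow ((s + ε/2) * (l:ℝ))
        nlinarith
      · have h1 : |D l| ≤ ∑ l ∈ Finset.range M, |D l| :=
          Finset.single_le_sum (f := fun l => |D l|) (fun _ _ => abs_nonneg _)
            (Finset.mem_range.2 (by omega))
        have h2 : 1 ≤ (2:ℝ) ^ ((s + ε/2) * (l:ℝ)) :=
          Real.one_le_rpow (by norm_num) (by positivity)
        have h3 := le_abs_self (D l)
        nlinarith
  obtain ⟨C, hC1, hC⟩ := hC
  have hp := (upR_const le_rfl C).mul upR_poly (Filter.Eventually.of_forall fun i => by positivity)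
  filter_upwards [hp (ε/2) (by positivity)] with i hi
  simp only [add_zero, zero_add] at hi
  have h2 := two_pos_rpow ((s + ε/2) * (i:ℝ))
  calc ∑ l ∈ Finset.range (i + 1), D l
      ≤ ∑ l ∈ Finset.range (i + 1), C * (2:ℝ) ^ ((s + ε/2) * (i:ℝ)) := by
        refine Finset.sum_le_sum fun l hl => (hC l).trans ?_
        have : (l:ℝ) ≤ i := by exact_mod_cast Nat.lt_succ_iff.1 (Finset.mem_range.1 hl)
        gcongr
        norm_num
    _ = C * ((i:ℝ) + 1) * (2:ℝ) ^ ((s + ε/2) * (i:ℝ)) := by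
        rw [Finset.sum_const, Finset.card_range, nsmul_eq_mul]; push_cast; ring
    _ ≤ C * ((i:ℝ) + 1) ^ 2 * (2:ℝ) ^ ((s + ε/2) * (i:ℝ)) := by
        have : (i:ℝ) + 1 ≤ ((i:ℝ) + 1) ^ 2 := by
          have : (0:ℝ) ≤ i := Nat.cast_nonneg i
          nlinarith
        gcongr
    _ ≤ (2:ℝ) ^ (ε/2 * (i:ℝ)) * (2:ℝ) ^ ((s + ε/2) * (i:ℝ)) := by gcongr
    _ = _ := by rw [← Real.rpow_add (by norm_num)]; congr 1; ring

/-- Comparison of exponents. -/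
lemma exponent_le {F : Filter ℕ} [F.NeBot] (hF : F ≤ Filter.atTop) {u : ℕ → ℝ} {s t : ℝ}
    (h : LoR F u s) (h' : UpR F u t) : s ≤ t := by
  refine le_of_forall_pos_le_add fun ε hε => ?_
  obtain ⟨i, h1, h2, h3⟩ := ((h (ε/2) (by positivity)).and ((h' (ε/2) (by positivity)).and
    ((Filter.eventually_ge_atTop 1).filter_mono hF))).exists
  have h4 := (Real.rpow_le_rpow_left_iff (by norm_num : (1:ℝ) < 2)).1 (h1.trans h2)
  have h5 : (0:ℝ) < i := by exact_mod_cast h3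
  have := le_of_mul_le_mul_right h4 h5
  linarith

/-- Dyadic summation of a weight against a nonincreasing sequence. -/
lemma dyadic_sum {L v : ℕ → ℝ} {d q : ℝ} (hL : ∀ n, 0 ≤ L n) (hv : Antitone v) (hv0 : ∀ n, 0 ≤ v n)
    (hB : UpR Filter.atTop (fun i => ∑ n ∈ Finset.range (2 ^ (i + 1)), L n) d)
    (hvu : UpR Filter.atTop (fun i => v (2 ^ i)) q) (hdq : 0 ≤ d + q) :
    UpR Filter.atTop (fun i => ∑ n ∈ Finset.range (2 ^ (i + 1)), L n * v n) (d + q) := by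
  have hD : UpR Filter.atTop
      (fun i => (∑ n ∈ Finset.range (2 ^ (i + 1)), L n) * v (2 ^ i)) (d + q) :=
    hB.mul hvu (Filter.Eventually.of_forall fun i => hv0 _)
  have hc0 : UpR Filter.atTop (fun _ => L 0 * v 0) (d + q) := fun ε hε => by
    filter_upwards [absorb_const (L 0 * v 0) (d + q + ε) (by linarith)] with i hi using hi
  refine (UpR.add le_rfl hc0 (hD.sum hdq)).of_le (Filter.Eventually.of_forall fun i => ?_)
  have step : ∀ i : ℕ, ∑ n ∈ Finset.range (2 ^ i), L n * v n ≤ L 0 * v 0 +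
      ∑ l ∈ Finset.range i, (∑ n ∈ Finset.range (2 ^ (l + 1)), L n) * v (2 ^ l) := by
    intro i
    induction i with
    | zero => simp
    | succ i ih =>
      rw [Finset.sum_range_succ, ← add_assoc]
      have hle : 2 ^ i ≤ 2 ^ (i + 1) := Nat.pow_le_pow_right (by norm_num) (by omega)
      rw [← Finset.sum_range_add_sum_Ico _ hle]
      refine add_le_add ih ?_
      calc ∑ n ∈ Finset.Ico (2 ^ i) (2 ^ (i + 1)), L n * v n
          ≤ ∑ n ∈ Finset.Ico (2 ^ i) (2 ^ (i + 1)), L n * v (2 ^ i) :=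
            Finset.sum_le_sum fun n hn =>
              mul_le_mul_of_nonneg_left (hv (Finset.mem_Ico.1 hn).1) (hL n)
        _ = (∑ n ∈ Finset.Ico (2 ^ i) (2 ^ (i + 1)), L n) * v (2 ^ i) := by rw [Finset.sum_mul]
        _ ≤ _ := by
            refine mul_le_mul_of_nonneg_right ?_ (hv0 _)
            refine Finset.sum_le_sum_of_subset_of_nonneg ?_ fun n _ _ => hL n
            intro n hn
            exact Finset.mem_range.2 (Finset.mem_Ico.1 hn).2
  exact step (i + 1)

/-- Scales at which a null sequence drops noticeably. -/
lemma good_scales {r : ℕ → ℝ} (hr : ∀ i, 0 < r i) (h0 : Filter.Tendsto r Filter.atTop (nhds 0)) :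
    ∃ᶠ i : ℕ in Filter.atTop, r (i + 1) / ((i:ℝ) + 1) ^ 2 ≤ r i - r (i + 1) := by
  intro hcon
  obtain ⟨M, hM⟩ := Filter.eventually_atTop.1 hcon
  have hmono : ∀ i : ℕ, M + 1 ≤ i → r i * ((i:ℝ) / (i + 1)) ≤ r (i + 1) * (((i:ℝ) + 1) / (i + 2)) := by
    intro i hi
    have h1 := hM i (by omega)
    push Not at h1
    have hi0 : (0:ℝ) < i := by
      have : 0 < i := by omega
      exact_mod_cast this
    have h2 : r i < r (i + 1) * ((((i:ℝ) + 1) ^ 2 + 1) / ((i:ℝ) + 1) ^ 2) := by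
      have : r (i + 1) * ((((i:ℝ) + 1) ^ 2 + 1) / ((i:ℝ) + 1) ^ 2)
        = r (i + 1) + r (i + 1) / ((i:ℝ) + 1) ^ 2 := by field_simp
      linarith
    have h3 : ((((i:ℝ) + 1) ^ 2 + 1) / ((i:ℝ) + 1) ^ 2) * ((i:ℝ) / (i + 1)) ≤ ((i:ℝ) + 1) / (i + 2) := by
      rw [div_mul_div_comm, div_le_div_iff₀ (by positivity) (by positivity)]
      have := sq_nonneg (i:ℝ)
      nlinarith [sq_nonneg (i:ℝ), hi0]
    calc r i * ((i:ℝ) / (i + 1)) ≤ r (i + 1) * ((((i:ℝ) + 1) ^ 2 + 1) / ((i:ℝ) + 1) ^ 2) * ((i:ℝ) / (i + 1)) := by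
          gcongr
      _ = r (i + 1) * (((((i:ℝ) + 1) ^ 2 + 1) / ((i:ℝ) + 1) ^ 2) * ((i:ℝ) / (i + 1))) := by ring
      _ ≤ _ := mul_le_mul_of_nonneg_left h3 (hr _).le
  set w0 := r (M + 1) * (((M + 1 : ℕ):ℝ) / ((M + 1 : ℕ) + 1)) with hw0
  have hw0p : 0 < w0 := mul_pos (hr _) (by positivity)
  have hall : ∀ i : ℕ, M + 1 ≤ i → w0 ≤ r i * ((i:ℝ) / (i + 1)) := by
    intro i hi
    induction i, hi using Nat.le_induction with
    | base => exact le_rfl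
    | succ i hi ih =>
      refine (ih.trans (hmono i hi)).trans (le_of_eq ?_)
      push_cast; ring_nf
  obtain ⟨i, hi, hiM⟩ := ((h0.eventually (gt_mem_nhds hw0p)).and
    (Filter.eventually_ge_atTop (M + 1))).exists
  have h1 := hall i hiM
  have h2 : (i:ℝ) / (i + 1) ≤ 1 := by
    rw [div_le_one (by positivity)]; linarith
  nlinarith [hr i]

lemma eta_lower {L e R : ℕ → ℝ} {x : ℝ} (hx : 0 < x) (hL : ∀ n, 1 ≤ L n) (he : ∀ n, 0 < e n)
    (hR : ∀ n, R n = 1 / L n + R (n + 1))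
    (hrec : ∀ n, e n = (e (n + 1) + 1 / L n) / (1 + x * L n * e (n + 1))) (d : ℕ) :
    ∀ j : ℕ, R j - R (j + d) ≤
      e j * Real.exp (∑ l ∈ Finset.range d, x * L (j + l) * e (j + l + 1)) := by
  induction d with
  | zero => intro j; simpa using (he j).le
  | succ d ih =>
    intro j
    have h1 := ih (j + 1)
    rw [Finset.sum_range_succ']
    have e1 : (∑ k ∈ Finset.range d, x * L (j + (k + 1)) * e (j + (k + 1) + 1))
        = ∑ l ∈ Finset.range d, x * L (j + 1 + l) * e (j + 1 + l + 1) := by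
      refine Finset.sum_congr rfl fun l _ => ?_
      rw [show j + (l + 1) = j + 1 + l by ring]
    rw [e1, Real.exp_add, show j + (d + 1) = j + 1 + d by ring]
    set S := ∑ l ∈ Finset.range d, x * L (j + 1 + l) * e (j + 1 + l + 1) with hS
    have hLj : 0 < L j := lt_of_lt_of_le one_pos (hL j)
    have hS0 : 0 ≤ S := Finset.sum_nonneg fun l _ => by
      have := hL (j + 1 + l); have := he (j + 1 + l + 1); positivity
    have hexpS : 1 ≤ Real.exp S := Real.one_le_exp hS0
    simp only [add_zero]
    set p := x * L j * e (j + 1) with hp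
    have hp0 : 0 < p := by have := he (j + 1); positivity
    have h2 : 1 + p ≤ Real.exp p := by linarith [Real.add_one_le_exp p]
    have h3 : e j * (1 + p) = e (j + 1) + 1 / L j := by
      rw [hrec j, ← hp, div_mul_cancel₀ _ (by positivity)]
    have h4 : e (j + 1) + 1 / L j ≤ e j * Real.exp p := by
      rw [← h3]; exact mul_le_mul_of_nonneg_left h2 (he j).le
    have h5 : (e (j + 1) + 1 / L j) * Real.exp S ≤ e j * Real.exp p * Real.exp S := by gcongr
    have h6 : 0 < 1 / L j := by positivity
    rw [hR j]
    nlinarith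

lemma eta_deriv {f g : ℝ → ℝ} {f' g' x l : ℝ} (hx : x ∈ Set.Ioo (0:ℝ) 1) (hl : 1 ≤ l)
    (hf : HasDerivAt f f' x) (hg : HasDerivAt g g' x)
    (hgpos : ∀ t ∈ Set.Ioo (0:ℝ) 1, 0 < g t)
    (hrec : ∀ t ∈ Set.Ioo (0:ℝ) 1, f t = (g t + 1 / l) / (1 + t * l * g t)) :
    -f' = (1 - x) / (1 + x * l * g x) ^ 2 * (-g') + l * g x * f x / (1 + x * l * g x) := by
  have hd : HasDerivAt (fun t => f t * (1 + t * l * g t) - g t)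
      (f' * (1 + x * l * g x) + f x * (1 * l * g x + x * l * g') - g') x := by
    have h1 : HasDerivAt (fun t : ℝ => t * l) (1 * l) x := (hasDerivAt_id x).mul_const l
    exact (hf.mul ((h1.mul hg).const_add 1)).sub hg
  have hc : HasDerivAt (fun t => f t * (1 + t * l * g t) - g t) 0 x := by
    refine (hasDerivAt_const x (1 / l)).congr_of_eventuallyEq ?_
    filter_upwards [Ioo_mem_nhds hx.1 hx.2] with t ht
    have := hgpos t ht
    have ht0 := ht.1
    have : 0 < 1 + t * l * g t := by positivity
    rw [hrec t ht, div_mul_cancel₀ _ this.ne']; ring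
  have h := hd.unique hc
  have hgx := hgpos x hx
  have hx0 := hx.1
  have hq : 0 < 1 + x * l * g x := by positivity
  have hfx : f x * (1 + x * l * g x) = g x + 1 / l := by
    rw [hrec x hx, div_mul_cancel₀ _ hq.ne']
  have hl0 : 0 < l := by linarith
  have key : (1 + x * l * g x) * (1 - x * l * f x) = 1 - x := by
    have : x * l * (f x * (1 + x * l * g x)) = x * l * g x + x := by
      rw [hfx]; field_simp
    nlinarith
  rw [← key]
  field_simp
  nlinarith

lemma linrec_expand {y g q : ℕ → ℝ} (h : ∀ n, y n = g n * y (n + 1) + q n) (k : ℕ) :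
    y 0 = ∑ j ∈ Finset.range k, (∏ l ∈ Finset.range j, g l) * q j
      + (∏ l ∈ Finset.range k, g l) * y k := by
  induction k with
  | zero => simp
  | succ k ih =>
    rw [ih, Finset.sum_range_succ, Finset.prod_range_succ, h k]; ring

/-- All estimates at one crossover scale. -/
lemma scale_bounds {L e R y : ℕ → ℝ} {x : ℝ} {k h : ℕ} (hx : 0 < x) (hx1 : x < 1) (hhk : h ≤ k)
    (hL : ∀ n, 1 ≤ L n) (he : ∀ n, 0 < e n) (heR : ∀ n, e n ≤ R n)
    (hR : ∀ n, R n = 1 / L n + R (n + 1))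
    (hrec : ∀ n, e n = (e (n + 1) + 1 / L n) / (1 + x * L n * e (n + 1)))
    (hy0 : ∀ n, 0 ≤ y n)
    (hy : ∀ n, y n = (1 - x) / (1 + x * L n * e (n + 1)) ^ 2 * y (n + 1)
      + L n * e (n + 1) * e n / (1 + x * L n * e (n + 1)))
    (hyR : y k ≤ 2 * R k / x)
    (hF : x * ∑ j ∈ Finset.range k, L j * e (j + 1) = 1) :
    1 ≤ x * ∑ j ∈ Finset.range k, L j * R j ∧
    y 0 ≤ ∑ j ∈ Finset.range k, L j * R j ^ 2 + 2 * R k / x ∧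
    x * (Real.exp (-1) * ((∑ j ∈ Finset.range h, L j) * (R h - R k))) ≤ 1 ∧
    (k * x ≤ 1 / 2 → 1 / 4 * Real.exp (-4) *
      ((∑ j ∈ Finset.range h, L j) * ((R h - R k) * (R h - R k))) ≤ y 0) := by
  have hL0 : ∀ n, 0 < L n := fun n => lt_of_lt_of_le one_pos (hL n)
  have hRp : ∀ n, 0 < R n := fun n => (he n).trans_le (heR n)
  have hRs : ∀ n, R (n + 1) ≤ R n := fun n => by
    rw [hR n]; have : 0 < 1 / L n := by have := hL0 n; positivity
    linarith
  have hRa : Antitone R := antitone_nat_of_succ_le hRs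
  have hp0 : ∀ n, 0 < x * L n * e (n + 1) := fun n => by
    have := hL0 n; have := he (n + 1); positivity
  have hsum1 : ∑ j ∈ Finset.range k, x * L j * e (j + 1) = 1 := by
    rw [← hF, Finset.mul_sum]; exact Finset.sum_congr rfl fun j _ => by ring
  have hsub : ∀ s ⊆ Finset.range k, ∑ j ∈ s, x * L j * e (j + 1) ≤ 1 := fun s hs => by
    rw [← hsum1]
    exact Finset.sum_le_sum_of_subset_of_nonneg hs fun j _ _ => (hp0 j).le
  have hp1 : ∀ j < k, x * L j * e (j + 1) ≤ 1 := fun j hj => by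
    simpa using hsub {j} (by simpa using hj)
  have hg0 : ∀ n, 0 ≤ (1 - x) / (1 + x * L n * e (n + 1)) ^ 2 := fun n => by
    have := hp0 n
    have : 0 ≤ 1 - x := by linarith
    positivity
  have hg1 : ∀ n, (1 - x) / (1 + x * L n * e (n + 1)) ^ 2 ≤ 1 := fun n => by
    have := hp0 n
    rw [div_le_one (by positivity)]; nlinarith
  have hq0 : ∀ n, 0 ≤ L n * e (n + 1) * e n / (1 + x * L n * e (n + 1)) := fun n => by
    have := hp0 n; have := hL0 n; have := he n; have := he (n + 1); positivity
  have hexp := linrec_expand hy k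
  have hlow : ∀ j ≤ h, Real.exp (-1) * (R h - R k) ≤ e j := fun j hj => by
    obtain ⟨d, rfl⟩ := Nat.exists_eq_add_of_le (hj.trans hhk)
    have h1 := eta_lower hx hL he hR hrec d j
    have h2 : ∑ l ∈ Finset.range d, x * L (j + l) * e (j + l + 1) ≤ 1 := by
      have := hsub (Finset.Ico j (j + d)) (fun n hn => by
        have := Finset.mem_Ico.1 hn; exact Finset.mem_range.2 this.2)
      rw [Finset.sum_Ico_eq_sum_range] at this
      simpa using this
    have h3 : e j * Real.exp (∑ l ∈ Finset.range d, x * L (j + l) * e (j + l + 1))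
        ≤ e j * Real.exp 1 := mul_le_mul_of_nonneg_left (Real.exp_le_exp.2 h2) (he j).le
    have h4 := hRa hj
    rw [Real.exp_neg, inv_mul_le_iff₀ (Real.exp_pos 1)]
    linarith
  have hdiff : 0 ≤ R h - R k := sub_nonneg.2 (hRa hhk)
  refine ⟨?_, ?_, ?_, ?_⟩
  · rw [← hF]
    refine mul_le_mul_of_nonneg_left (Finset.sum_le_sum fun j _ => ?_) hx.le
    exact mul_le_mul_of_nonneg_left ((heR _).trans (hRs j)) (hL0 j).le
  · rw [hexp]
    have hprod : ∀ j, ∏ l ∈ Finset.range j, (1 - x) / (1 + x * L l * e (l + 1)) ^ 2 ≤ 1 :=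
      fun j => Finset.prod_le_one (fun l _ => hg0 l) (fun l _ => hg1 l)
    refine add_le_add (Finset.sum_le_sum fun j _ => ?_) ?_
    · refine (mul_le_of_le_one_left (hq0 j) (hprod j)).trans ?_
      refine (div_le_self (by have := hL0 j; have := he j; have := he (j + 1); positivity)
        (by linarith [hp0 j])).trans ?_
      rw [mul_assoc, pow_two]
      refine mul_le_mul_of_nonneg_left ?_ (hL0 j).le
      exact mul_le_mul ((heR _).trans (hRs j)) (heR j) (he j).le (hRp j).le
    · exact (mul_le_of_le_one_left (hy0 k) (hprod k)).trans hyR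
  · refine le_trans ?_ hF.le
    refine mul_le_mul_of_nonneg_left ?_ hx.le
    calc Real.exp (-1) * ((∑ j ∈ Finset.range h, L j) * (R h - R k))
        = ∑ j ∈ Finset.range h, L j * (Real.exp (-1) * (R h - R k)) := by
          rw [← Finset.sum_mul]; ring
      _ ≤ ∑ j ∈ Finset.range h, L j * e (j + 1) := by
          refine Finset.sum_le_sum fun j hj => mul_le_mul_of_nonneg_left (hlow _ ?_) (hL0 j).le
          have := Finset.mem_range.1 hj; omega
      _ ≤ _ := Finset.sum_le_sum_of_subset_of_nonneg (Finset.range_mono hhk)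
          fun j _ _ => (mul_pos (hL0 j) (he _)).le
  · intro hkx
    rw [hexp]
    have hprodlow : ∀ j ≤ k, 1 / 2 * Real.exp (-2) ≤
        ∏ l ∈ Finset.range j, (1 - x) / (1 + x * L l * e (l + 1)) ^ 2 := fun j hj => by
      rw [Finset.prod_div_distrib, Finset.prod_const, Finset.card_range, Finset.prod_pow]
      have h1 : ∏ l ∈ Finset.range j, (1 + x * L l * e (l + 1)) ≤ Real.exp 1 := by
        calc _ ≤ ∏ l ∈ Finset.range j, Real.exp (x * L l * e (l + 1)) := by
              refine Finset.prod_le_prod (fun l _ => by linarith [hp0 l]) fun l _ => ?_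
              linarith [Real.add_one_le_exp (x * L l * e (l + 1))]
          _ = Real.exp (∑ l ∈ Finset.range j, x * L l * e (l + 1)) := (Real.exp_sum _ _).symm
          _ ≤ _ := Real.exp_le_exp.2 (hsub _ (Finset.range_mono hj))
      have h1p : 0 < ∏ l ∈ Finset.range j, (1 + x * L l * e (l + 1)) :=
        Finset.prod_pos fun l _ => by linarith [hp0 l]
      have h2 : 1 / 2 ≤ (1 - x) ^ j := by
        have hb := one_add_mul_le_pow (a := -x) (by linarith) j
        have : (j:ℝ) ≤ k := by exact_mod_cast hj
        have : (1:ℝ) + -x = 1 - x := by ring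
        rw [this] at hb
        nlinarith
      rw [le_div_iff₀ (by positivity)]
      have h3 : (∏ l ∈ Finset.range j, (1 + x * L l * e (l + 1))) ^ 2 ≤ Real.exp 2 := by
        calc _ ≤ Real.exp 1 ^ 2 := by gcongr
          _ = Real.exp 2 := by rw [← Real.exp_nat_mul]; norm_num
      calc 1 / 2 * Real.exp (-2) * _ ≤ 1 / 2 * Real.exp (-2) * Real.exp 2 := by gcongr
        _ = 1 / 2 := by rw [mul_assoc, ← Real.exp_add]; norm_num
        _ ≤ _ := h2
    have htail : 0 ≤ (∏ l ∈ Finset.range k, (1 - x) / (1 + x * L l * e (l + 1)) ^ 2) * y k :=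
      mul_nonneg (Finset.prod_nonneg fun l _ => hg0 l) (hy0 k)
    refine le_trans ?_ (le_add_of_nonneg_right htail)
    have hE : Real.exp (-4) = Real.exp (-2) * (Real.exp (-1) * Real.exp (-1)) := by
      rw [← Real.exp_add, ← Real.exp_add]; norm_num
    calc 1 / 4 * Real.exp (-4) * ((∑ j ∈ Finset.range h, L j) * ((R h - R k) * (R h - R k)))
        = ∑ j ∈ Finset.range h, (1 / 2 * Real.exp (-2)) *
          (L j * (Real.exp (-1) * (R h - R k)) * (Real.exp (-1) * (R h - R k)) / 2) := by
          rw [hE, ← Finset.mul_sum, ← Finset.sum_div, ← Finset.sum_mul, ← Finset.sum_mul]; ring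
      _ ≤ ∑ j ∈ Finset.range h, (∏ l ∈ Finset.range j, (1 - x) / (1 + x * L l * e (l + 1)) ^ 2) *
          (L j * e (j + 1) * e j / (1 + x * L j * e (j + 1))) := by
          refine Finset.sum_le_sum fun j hj => ?_
          have hj := Finset.mem_range.1 hj
          have h0 : 0 ≤ Real.exp (-1) * (R h - R k) := by positivity
          have hLj := hL0 j
          have := he (j + 1)
          have := he j
          have := hp0 j
          refine mul_le_mul (hprodlow j (by omega)) ?_ (by positivity)
            (Finset.prod_nonneg fun l _ => hg0 l)
          refine div_le_div₀ (by positivity) ?_ (by positivity) (by linarith [hp1 j (by omega)])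
          refine mul_le_mul ?_ (hlow j (by omega)) h0 (by positivity)
          exact mul_le_mul_of_nonneg_left (hlow (j + 1) (by omega)) hLj.le
      _ ≤ _ := Finset.sum_le_sum_of_subset_of_nonneg (Finset.range_mono hhk)
          fun j _ _ => mul_nonneg (Finset.prod_nonneg fun l _ => hg0 l) (hq0 j)

lemma zero_asymp_log {f : ℝ → ℝ} {e : ℝ} (h : ZeroAsymp f e) {ε : ℝ} (hε : 0 < ε) :
    ∀ᶠ x in nhdsWithin (0:ℝ) (Set.Ioi 0), x < 1 ∧ 0 < f x ∧
      (e + ε) * Real.log x ≤ Real.log (f x) ∧ Real.log (f x) ≤ (e - ε) * Real.log x := by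
  obtain ⟨c1, c2, p1, p2, x0, hc1, hc12, hp, hx0, hx01, hf⟩ := h
  have ht : Filter.Tendsto (fun x : ℝ => Real.log (1 / x)) (nhdsWithin (0:ℝ) (Set.Ioi 0))
      Filter.atTop := by
    simp only [one_div]
    exact Real.tendsto_log_atTop.comp tendsto_inv_nhdsGT_zero
  have hup := ht.eventually (absorb_exp c2 p2 ε hε)
  have hlo := ht.eventually (absorb_exp c1⁻¹ (-p1) ε hε)
  have hx0' : ∀ᶠ x in nhdsWithin (0:ℝ) (Set.Ioi 0), x < x0 :=
    (gt_mem_nhds hx0 : ∀ᶠ x in nhds (0:ℝ), x < x0).filter_mono nhdsWithin_le_nhds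
  filter_upwards [hup, hlo, hx0', self_mem_nhdsWithin] with x h1 h2 h3 h4
  have hxp : 0 < x := h4
  obtain ⟨ha, hb⟩ := hf x hxp h3
  have hly : 0 < Real.log (1 / x) := by
    apply Real.log_pos
    rw [lt_div_iff₀ hxp]; linarith
  have hxe := Real.rpow_pos_of_pos hxp e
  have hl1 := Real.rpow_pos_of_pos hly p1
  have hfp : 0 < f x := lt_of_lt_of_le (by positivity) ha
  have hlog : Real.log (1 / x) = - Real.log x := by rw [one_div, Real.log_inv]
  refine ⟨by linarith, hfp, ?_, ?_⟩
  · rw [Real.le_log_iff_exp_le hfp]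
    refine le_trans ?_ ha
    rw [Real.rpow_neg hly.le, ← mul_inv] at h2
    have h5 : Real.exp (-(ε * Real.log (1 / x))) ≤ c1 * Real.log (1 / x) ^ p1 := by
      rw [Real.exp_neg]; exact inv_le_of_inv_le₀ (by positivity) h2
    calc Real.exp ((e + ε) * Real.log x) = x ^ e * Real.exp (-(ε * Real.log (1 / x))) := by
          rw [Real.rpow_def_of_pos hxp, ← Real.exp_add, hlog]; congr 1; ring
      _ ≤ x ^ e * (c1 * Real.log (1 / x) ^ p1) := by gcongr
      _ = _ := by ring
  · rw [Real.log_le_iff_le_exp hfp]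
    refine hb.trans ?_
    calc c2 * x ^ e * Real.log (1 / x) ^ p2 = x ^ e * (c2 * Real.log (1 / x) ^ p2) := by ring
      _ ≤ x ^ e * Real.exp (ε * Real.log (1 / x)) := by gcongr
      _ = _ := by
          rw [Real.rpow_def_of_pos hxp, ← Real.exp_add, hlog]; congr 1; ring

lemma final_exponent {F : Filter ℕ} [F.NeBot] (hF : F ≤ Filter.atTop) {f : ℝ → ℝ} {e σ m : ℝ}
    (hσ : 0 ≤ σ) {x : ℕ → ℝ} (hf : ZeroAsymp f e)
    (hx : Filter.Tendsto x F (nhdsWithin (0:ℝ) (Set.Ioi 0)))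
    (h1 : LoR F x (-σ)) (h2 : UpR F x (-σ)) (h3 : LoR F (fun i => f (x i)) m)
    (h4 : UpR F (fun i => f (x i)) m) : m + e * σ = 0 := by
  have key : ∀ ε : ℝ, 0 < ε → ε ≤ 1 → |m + e * σ| ≤ ε * (2 + σ + |e|) := by
    intro ε hε hε1
    have hx0 : ∀ᶠ i in F, 0 < x i := hx.eventually self_mem_nhdsWithin
    obtain ⟨i, hi1, hi2, hi3, hi4, ⟨hx1, hfp, hi5, hi6⟩, hi7, hi0⟩ :=
      ((h1 ε hε).and ((h2 ε hε).and ((h3 ε hε).and ((h4 ε hε).and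
        ((hx.eventually (zero_asymp_log hf hε)).and
        (((Filter.eventually_ge_atTop 1).filter_mono hF).and hx0)))))).exists
    have hl : 0 < Real.log 2 := Real.log_pos (by norm_num)
    have ht : 0 < (i:ℝ) * Real.log 2 := mul_pos (by exact_mod_cast hi7) hl
    set t := (i:ℝ) * Real.log 2 with htd
    have lg : ∀ s : ℝ, Real.log ((2:ℝ) ^ (s * (i:ℝ))) = s * t := fun s => by
      rw [Real.log_rpow (by norm_num), htd]; ring
    have g1 := Real.log_le_log (two_pos_rpow _) hi1
    have g2 := Real.log_le_log hi0 hi2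
    have g3 := Real.log_le_log (two_pos_rpow _) hi3
    have g4 := Real.log_le_log hfp hi4
    rw [lg] at g1 g2 g3 g4
    set lam := Real.log (x i)
    set lf := Real.log (f (x i))
    have hlam : lam < 0 := Real.log_neg hi0 hx1
    have a1 : |lf - e * lam| ≤ ε * ((σ + ε) * t) := by
      rw [abs_le]; constructor <;> nlinarith
    have a2 : |e * (lam + σ * t)| ≤ |e| * (ε * t) := by
      rw [abs_mul]
      refine mul_le_mul_of_nonneg_left ?_ (abs_nonneg e)
      rw [abs_le]; constructor <;> nlinarith
    have a3 : |m * t - lf| ≤ ε * t := by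
      rw [abs_le]; constructor <;> nlinarith
    have a4 : |m + e * σ| * t ≤ ε * (1 + (σ + ε) + |e|) * t := by
      rw [← abs_of_pos ht, ← abs_mul, abs_of_pos ht]
      have : (m + e * σ) * t = (m * t - lf) + (lf - e * lam) + e * (lam + σ * t) := by ring
      rw [this]
      refine (abs_add_three _ _ _).trans ?_
      nlinarith
    have a5 := le_of_mul_le_mul_right a4 ht
    nlinarith
  by_contra hne
  have hpos : 0 < |m + e * σ| := abs_pos.2 hne
  set A := 2 + σ + |e| with hA
  have hA2 : 2 ≤ A := by have := abs_nonneg e; linarith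
  have := key (min 1 (|m + e * σ| / (2 * A))) (by positivity) (min_le_left _ _)
  have h5 : min 1 (|m + e * σ| / (2 * A)) * A ≤ |m + e * σ| / (2 * A) * A := by
    gcongr; exact min_le_right _ _
  have h6 : |m + e * σ| / (2 * A) * A = |m + e * σ| / 2 := by field_simp
  linarith

lemma UpR.shift {u : ℕ → ℝ} {s : ℝ} (h : UpR Filter.atTop u s) :
    UpR Filter.atTop (fun i => u (i + 1)) s := fun ε hε => by
  have h1 := (Filter.tendsto_add_atTop_nat 1).eventually (h (ε/2) (by positivity))
  filter_upwards [h1, absorb_const ((2:ℝ) ^ (s + ε/2)) (ε/2) (by positivity)] with i hi hi2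
  calc u (i + 1) ≤ _ := hi
    _ = (2:ℝ) ^ (s + ε/2) * (2:ℝ) ^ ((s + ε/2) * (i:ℝ)) := by
        rw [← Real.rpow_add (by norm_num)]; congr 1; push_cast; ring
    _ ≤ (2:ℝ) ^ (ε/2 * (i:ℝ)) * (2:ℝ) ^ ((s + ε/2) * (i:ℝ)) := by gcongr
    _ = _ := by rw [← Real.rpow_add (by norm_num)]; congr 1; ring

/-- Theorem 10, the paper's main result in the transient case: for a multigraph with
volume doubling, Hausdorff dimension `2 ≤ d_H < 4`, resistance exponent `ρ`, the
universal bounds, the recursion, `η_n` nonincreasing convex with `η_n(0+) = R_n`,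
and existence of the crossover scales `x_k`, if the spectral dimension `d_s` exists
(`|η_0'(x)| ∼ x^{-2+d_s/2}`) then `d_s = 2 d_H/(2+ρ)`. -/
theorem stmt_18 (L : ℕ → ℝ) (hL : ∀ n : ℕ, 1 ≤ L n)
    (hsum : Summable (fun n : ℕ => 1 / L n))
    (R : ℕ → ℝ) (hR : ∀ N : ℕ, R N = ∑' n : ℕ, 1 / L (N + n))
    (c : ℝ) (hc : 1 < c) (N₀ : ℕ)
    (hdbl : ∀ N : ℕ, N₀ < N →
      (∑ n ∈ Finset.range (2*N+1), L n) ≤ c * ∑ n ∈ Finset.range (N+1), L n)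
    (dH ρ : ℝ) (hdH2 : 2 ≤ dH) (hdH4 : dH < 4)
    (hB : NAsymp (fun N => ∑ n ∈ Finset.range (N+1), L n) dH)
    (hRas : NAsymp R (2 - dH + ρ))
    (η η' : ℕ → ℝ → ℝ)
    (hpos : ∀ (n : ℕ), ∀ x ∈ Set.Ioo (0:ℝ) 1, 0 < η n x)
    (hderiv : ∀ (n : ℕ), ∀ x ∈ Set.Ioo (0:ℝ) 1, HasDerivAt (η n) (η' n x) x)
    (hmono : ∀ (n : ℕ), ∀ x ∈ Set.Ioo (0:ℝ) 1, η' n x ≤ 0)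
    (hconv : ∀ n : ℕ, ConvexOn ℝ (Set.Ioo (0:ℝ) 1) (η n))
    (hlim : ∀ n : ℕ, Filter.Tendsto (η n) (nhdsWithin 0 (Set.Ioi 0)) (nhds (R n)))
    (hbnd : ∀ (n : ℕ), ∀ x ∈ Set.Ioo (0:ℝ) 1,
      1 / L n ≤ η n x ∧ η n x ≤ x ^ (-(1:ℝ)/2))
    (hrec : ∀ (n : ℕ), ∀ x ∈ Set.Ioo (0:ℝ) 1,
      η n x = (η (n+1) x + 1 / L n) / (1 + x * L n * η (n+1) x))
    (xs : ℕ → ℝ) (K : ℕ)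
    (hxs : ∀ k : ℕ, K ≤ k → xs k ∈ Set.Ioo (0:ℝ) 1 ∧
      xs k * ∑ j ∈ Finset.range k, L j * η (j+1) (xs k) = 1)
    (hxs0 : Filter.Tendsto xs Filter.atTop (nhds 0))
    (ds : ℝ) (hds : ZeroAsymp (fun x => |η' 0 x|) (-2 + ds/2)) :
    ds = 2 * dH / (2 + ρ) := by
  classical
  have hL0 : ∀ n, 0 < L n := fun n => lt_of_lt_of_le one_pos (hL n)
  have hsumN : ∀ N, Summable (fun n : ℕ => 1 / L (N + n)) := fun N => by
    have := (summable_nat_add_iff N).2 hsum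
    simpa [add_comm] using this
  have hRrec : ∀ n, R n = 1 / L n + R (n + 1) := fun n => by
    rw [hR n, (hsumN n).tsum_eq_zero_add, hR (n + 1)]
    simp only [add_zero]
    congr 1
    exact tsum_congr fun b => by rw [show n + (b + 1) = n + 1 + b by ring]
  have hRp : ∀ n, 0 < R n := fun n => by
    rw [hR n]
    exact (hsumN n).tsum_pos (fun i => by have := hL0 (n + i); positivity) 0
      (by have := hL0 (n + 0); positivity)
  have hRa : Antitone R := antitone_nat_of_succ_le fun n => by
    rw [hRrec n]
    have := hL0 n
    have : 0 < 1 / L n := by positivity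
    linarith
  have hR0 : Filter.Tendsto R Filter.atTop (nhds 0) := by
    have := tendsto_sum_nat_add (fun n : ℕ => 1 / L n)
    refine this.congr fun N => ?_
    rw [hR N]
    exact tsum_congr fun b => by rw [add_comm]
  -- bounds on η at fixed x
  have hanti : ∀ n, AntitoneOn (η n) (Set.Ioo (0:ℝ) 1) := fun n => by
    refine antitoneOn_of_deriv_nonpos (convex_Ioo 0 1)
      (fun x hx => (hderiv n x hx).continuousAt.continuousWithinAt)
      (fun x hx => ?_) (fun x hx => ?_)
    · rw [interior_Ioo] at hx
      exact (hderiv n x hx).differentiableAt.differentiableWithinAt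
    · rw [interior_Ioo] at hx
      rw [(hderiv n x hx).deriv]; exact hmono n x hx
  have hηR : ∀ n, ∀ x ∈ Set.Ioo (0:ℝ) 1, η n x ≤ R n := fun n x hx => by
    refine ge_of_tendsto (hlim n) ?_
    filter_upwards [Ioo_mem_nhdsGT hx.1] with t ht
    exact hanti n ⟨ht.1, ht.2.trans hx.2⟩ hx ht.2.le
  have hyR : ∀ n, ∀ x ∈ Set.Ioo (0:ℝ) 1, -η' n x ≤ 2 * R n / x := fun n x hx => by
    have hx0 := hx.1
    have hx2 : x / 2 ∈ Set.Ioo (0:ℝ) 1 := ⟨by linarith, by linarith [hx.2]⟩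
    have h1 := (hconv n).slope_le_of_hasDerivAt hx2 hx (by linarith) (hderiv n x hx)
    rw [slope_def_field, div_le_iff₀ (by linarith)] at h1
    have h2 := hηR n _ hx2
    have h3 := hpos n x hx
    rw [le_div_iff₀ hx0]
    nlinarith
  -- exponents
  set a := 2 - dH + ρ with ha
  have hBup := nasymp_up hB 1
  have hBlo := nasymp_lo hB 0
  have hRup0 := nasymp_up hRas 0
  simp only [add_zero] at hBlo hRup0
  have hb : UpR Filter.atTop (fun i => ∑ n ∈ Finset.range (2 ^ (i + 1)), L n) dH :=
    hBup.of_le (Filter.Eventually.of_forall fun i =>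
      Finset.sum_le_sum_of_subset_of_nonneg (Finset.range_mono (by omega)) fun n _ _ => (hL0 n).le)
  have hσ2 : 2 ≤ dH + a := by
    have hup : UpR Filter.atTop
        (fun i => (∑ n ∈ Finset.range (2 ^ (i + 1)), L n) * R (2 ^ i)) (dH + a) :=
      hb.mul hRup0 (Filter.Eventually.of_forall fun i => (hRp _).le)
    have hlo : LoR Filter.atTop (fun i => ((2:ℝ) ^ i) ^ 2) 2 := fun ε hε =>
      Filter.Eventually.of_forall fun i => by
        have e1 : ((2:ℝ) ^ i) ^ 2 = (2:ℝ) ^ (2 * (i:ℝ)) := by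
          rw [mul_comm, Real.rpow_mul (by norm_num), Real.rpow_natCast]
          exact_mod_cast (Real.rpow_natCast ((2:ℝ) ^ i) 2).symm
        simp only [e1]
        refine Real.rpow_le_rpow_of_exponent_le (by norm_num) ?_
        have : (0:ℝ) ≤ i := Nat.cast_nonneg i
        nlinarith
    refine exponent_le le_rfl hlo (hup.of_le (Filter.Eventually.of_forall fun i => ?_))
    have hcs := Finset.sum_sq_le_sum_mul_sum_of_sq_eq_mul (Finset.range (2 ^ i))
      (r := fun _ => (1:ℝ)) (f := fun n => L (2 ^ i + n)) (g := fun n => 1 / L (2 ^ i + n))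
      (fun n _ => (hL0 _).le) (fun n _ => by have := hL0 (2 ^ i + n); positivity)
      (fun n _ => by have := hL0 (2 ^ i + n); field_simp)
    have h1 : ∑ n ∈ Finset.range (2 ^ i), 1 / L (2 ^ i + n) ≤ R (2 ^ i) := by
      rw [hR]
      exact (hsumN _).sum_le_tsum _ fun n _ => by have := hL0 (2 ^ i + n); positivity
    have h2 : ∑ n ∈ Finset.range (2 ^ i), L (2 ^ i + n) ≤ ∑ n ∈ Finset.range (2 ^ (i + 1)), L n := by
      rw [show 2 ^ (i + 1) = 2 ^ i + 2 ^ i by ring, Finset.sum_range_add]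
      exact le_add_of_nonneg_left (Finset.sum_nonneg fun n _ => (hL0 n).le)
    have h3 : ∑ n ∈ Finset.range (2 ^ i), (1:ℝ) = (2:ℝ) ^ i := by simp
    rw [h3] at hcs
    exact hcs.trans (mul_le_mul h2 h1
      (Finset.sum_nonneg fun n _ => by have := hL0 (2 ^ i + n); positivity)
      (Finset.sum_nonneg fun n _ => (hL0 n).le))
  have hS : UpR Filter.atTop (fun i => ∑ n ∈ Finset.range (2 ^ (i + 2)), L n * R n) (dH + a) :=
    (dyadic_sum (fun n => (hL0 n).le) hRa (fun n => (hRp n).le) hb hRup0 (by linarith)).shift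
  have hQ : UpR Filter.atTop (fun i => ∑ n ∈ Finset.range (2 ^ (i + 2)), L n * R n ^ 2)
      (dH + (a + a)) := by
    refine (dyadic_sum (v := fun n => R n ^ 2) (fun n => (hL0 n).le) (fun m n hmn => ?_)
      (fun n => sq_nonneg _) hb ?_ (by rw [ha]; linarith)).shift
    · exact pow_le_pow_left₀ (hRp n).le (hRa hmn) 2
    · refine (hRup0.mul hRup0 (Filter.Eventually.of_forall fun i => (hRp _).le)).of_le
        (Filter.Eventually.of_forall fun i => ?_)
      simp only [pow_two, le_refl]
  have hpow_atTop : ∀ j : ℕ, Filter.Tendsto (fun i : ℕ => 2 ^ (i + j)) Filter.atTop Filter.atTop :=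
    fun j => Filter.tendsto_atTop_mono
      (fun i => ((Nat.lt_two_pow_self (n := i + j)).le.trans' (Nat.le_add_right i j)))
      Filter.tendsto_id
  -- good scales
  have hgood := good_scales (r := fun i => R (2 ^ (i + 1))) (fun i => hRp _)
    (hR0.comp (hpow_atTop 1))
  set F : Filter ℕ := Filter.atTop ⊓ Filter.principal
    {i : ℕ | R (2 ^ (i + 1 + 1)) / ((i:ℝ) + 1) ^ 2 ≤ R (2 ^ (i + 1)) - R (2 ^ (i + 1 + 1))} with hFdef
  have hFne : F.NeBot := Filter.frequently_iff_neBot.1 hgood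
  have hF : F ≤ Filter.atTop := inf_le_left
  have hFg : ∀ᶠ i : ℕ in F, R (2 ^ (i + 2)) / ((i:ℝ) + 1) ^ 2
      ≤ R (2 ^ (i + 1)) - R (2 ^ (i + 2)) :=
    Filter.mem_inf_of_right (Filter.mem_principal_self _)
  have hdlo : LoR F (fun i => R (2 ^ (i + 1)) - R (2 ^ (i + 2))) a := by
    have h1 := ((nasymp_lo hRas 2).mul
      (upR_poly.inv (Filter.Eventually.of_forall fun i => by positivity))).mono hF
    rw [neg_zero, add_zero] at h1
    exact h1.of_le (by simpa only [div_eq_mul_inv] using hFg)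
  have hblo : LoR F (fun i => ∑ n ∈ Finset.range (2 ^ (i + 1)), L n) dH := by
    refine (hBlo.mono hF).of_le (Filter.Eventually.of_forall fun i => ?_)
    refine Finset.sum_le_sum_of_subset_of_nonneg (Finset.range_mono ?_) fun n _ _ => (hL0 n).le
    have : 0 < 2 ^ i := by positivity
    rw [pow_succ]; omega
  -- estimates at the crossover scales
  have hK : ∀ᶠ i : ℕ in Filter.atTop, K ≤ 2 ^ (i + 2) :=
    (hpow_atTop 2).eventually (Filter.eventually_ge_atTop K)
  have hsc := fun (i : ℕ) (hi : K ≤ 2 ^ (i + 2)) =>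
    scale_bounds (L := L) (e := fun n => η n (xs (2 ^ (i + 2)))) (R := R)
      (y := fun n => -η' n (xs (2 ^ (i + 2)))) (x := xs (2 ^ (i + 2)))
      (k := 2 ^ (i + 2)) (h := 2 ^ (i + 1)) (hxs _ hi).1.1 (hxs _ hi).1.2
      (Nat.pow_le_pow_right (by norm_num) (by omega)) hL
      (fun n => hpos n _ (hxs _ hi).1) (fun n => hηR n _ (hxs _ hi).1) hRrec
      (fun n => hrec n _ (hxs _ hi).1)
      (fun n => neg_nonneg.2 (hmono n _ (hxs _ hi).1))
      (fun n => eta_deriv (hxs _ hi).1 (hL n) (hderiv n _ (hxs _ hi).1)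
        (hderiv (n + 1) _ (hxs _ hi).1) (hpos (n + 1)) (hrec n))
      (hyR _ _ (hxs _ hi).1) (hxs _ hi).2
  set X : ℕ → ℝ := fun i => xs (2 ^ (i + 2)) with hX
  have hXlo : LoR F X (-(dH + a)) := by
    refine ((hS.inv (Filter.Eventually.of_forall fun i => ?_)).mono hF).of_le ?_
    · exact Finset.sum_pos (fun n _ => mul_pos (hL0 n) (hRp n)) (by simp)
    · filter_upwards [hK.filter_mono hF] with i hi
      have h1 := (hsc i hi).1
      have hp : 0 < ∑ n ∈ Finset.range (2 ^ (i + 2)), L n * R n :=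
        Finset.sum_pos (fun n _ => mul_pos (hL0 n) (hRp n)) (by simp)
      rw [inv_le_iff_one_le_mul₀ hp]
      exact h1
  have hXup : UpR F X (-(dH + a)) := by
    have h1 := ((loR_const hF (Real.exp_pos (-1))).mul (hblo.mul hdlo)).inv
    rw [zero_add] at h1
    refine h1.of_le ?_
    filter_upwards [hK.filter_mono hF, hFg] with i hi hg
    have hd : 0 < R (2 ^ (i + 1)) - R (2 ^ (i + 2)) := lt_of_lt_of_le
      (div_pos (hRp _) (by positivity)) hg
    have hp : 0 < ∑ n ∈ Finset.range (2 ^ (i + 1)), L n :=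
      Finset.sum_pos (fun n _ => hL0 n) (by simp)
    rw [le_inv_comm₀ (hxs _ hi).1.1 (by positivity), ← one_div, le_div_iff₀' (hxs _ hi).1.1]
    exact (hsc i hi).2.2.1
  have habs : ∀ i, K ≤ 2 ^ (i + 2) → |η' 0 (X i)| = -η' 0 (X i) := fun i hi =>
    abs_of_nonpos (hmono 0 _ (hxs _ hi).1)
  have hkx : ∀ᶠ i : ℕ in F, ((2 ^ (i + 2) : ℕ) : ℝ) * X i ≤ 1 / 2 := by
    filter_upwards [hXup (1/2) (by norm_num), (absorb_const 8 (1/2) (by norm_num)).filter_mono hF]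
      with i h1 h2
    have h3 : (2:ℝ) ^ ((-(dH + a) + 1/2) * (i:ℝ)) ≤ (2:ℝ) ^ ((-(3/2)) * (i:ℝ)) := by
      refine Real.rpow_le_rpow_of_exponent_le (by norm_num) ?_
      have : (0:ℝ) ≤ i := Nat.cast_nonneg i
      nlinarith
    have h4 : ((2 ^ (i + 2) : ℕ) : ℝ) = 4 * (2:ℝ) ^ ((i:ℝ)) := by
      rw [Real.rpow_natCast]; push_cast; ring
    have h5 : (2:ℝ) ^ ((i:ℝ)) * (2:ℝ) ^ ((-(3/2)) * (i:ℝ)) * (2:ℝ) ^ (1 / 2 * (i:ℝ)) = 1 := by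
      rw [← Real.rpow_add (by norm_num), ← Real.rpow_add (by norm_num),
        show (i:ℝ) + -(3/2) * (i:ℝ) + 1 / 2 * (i:ℝ) = 0 by ring, Real.rpow_zero]
    rw [h4]
    have h6 := two_pos_rpow (i:ℝ)
    have h7 := two_pos_rpow (-(3/2) * (i:ℝ))
    have h8 : (2:ℝ) ^ ((i:ℝ)) * X i ≤ (2:ℝ) ^ ((i:ℝ)) * (2:ℝ) ^ ((-(3/2)) * (i:ℝ)) :=
      mul_le_mul_of_nonneg_left (h1.trans h3) h6.le
    have h9 : 0 < (2:ℝ) ^ ((i:ℝ)) * (2:ℝ) ^ ((-(3/2)) * (i:ℝ)) := by positivity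
    nlinarith
  have hflo : LoR F (fun i => |η' 0 (X i)|) (dH + (a + a)) := by
    have h1 := (loR_const hF (show 0 < 1 / 4 * Real.exp (-4) by positivity)).mul
      (hblo.mul (hdlo.mul hdlo))
    rw [zero_add] at h1
    refine h1.of_le ?_
    filter_upwards [hK.filter_mono hF, hkx] with i hi hk
    rw [habs i hi]
    exact (hsc i hi).2.2.2 hk
  have hfup : UpR F (fun i => |η' 0 (X i)|) (dH + (a + a)) := by
    have h0 := (upR_const (le_refl (Filter.atTop : Filter ℕ)) 2).mul
      (hS.mul (nasymp_up hRas 2) (Filter.Eventually.of_forall fun i => (hRp _).le))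
      (Filter.Eventually.of_forall fun i => mul_nonneg
        (Finset.sum_nonneg fun n _ => (mul_pos (hL0 n) (hRp n)).le) (hRp _).le)
    rw [zero_add, add_assoc] at h0
    refine ((hQ.add le_rfl h0).mono hF).of_le ?_
    filter_upwards [hK.filter_mono hF] with i hi
    rw [habs i hi]
    refine (hsc i hi).2.1.trans ?_
    refine add_le_add le_rfl ?_
    rw [div_le_iff₀ (hxs _ hi).1.1]
    have h1 := (hsc i hi).1
    have h2 := hRp (2 ^ (i + 2))
    nlinarith
  have hXt : Filter.Tendsto X F (nhdsWithin (0:ℝ) (Set.Ioi 0)) := by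
    refine tendsto_nhdsWithin_iff.2 ⟨(hxs0.comp (hpow_atTop 2)).mono_left hF, ?_⟩
    filter_upwards [hK.filter_mono hF] with i hi using (hxs _ hi).1.1
  have hfin := final_exponent hF (by linarith) hds hXt hXlo hXup hflo hfup
  have hne : (2 + ρ) ≠ 0 := by
    have : dH + a = 2 + ρ := by rw [ha]; ring
    linarith
  rw [eq_div_iff hne]
  rw [ha] at hfin
  nlinarith
end
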